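/- If (T,f) is a Hubbard tree with *-periodic or preperiodic kneading sequence ν, then ν determines (T,f) uniquely up to equivalence: any two Hubbard trees with the same kneading sequence ν are equivalent. -/

import Mathlib

/- Common definitions for formalizing "Admissibility of kneading sequences and
structure of Hubbard trees for quadratic polynomials" by Bruin–Schleicher. -/

namespace HubbardTrees

/-- The symbols `0`, `1`, `*` used for itineraries and kneading sequences. -/
inductive Sym : Type
  | zero : Sym
  | one : Sym
  | star : Sym
deriving DecidableEq

/-- `A` is an arc in `X` joining `x` and `y` (a point if `x = y`, otherwise a
homeomorphic image of `[0,1]` with endpoints `x` and `y`). -/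
def IsArcBetween {X : Type*} [TopologicalSpace X] (A : Set X) (x y : X) : Prop :=
  (x = y ∧ A = {x}) ∨
  (x ≠ y ∧ ∃ γ : Path x y, Topology.IsEmbedding ⇑γ ∧ Set.range ⇑γ = A)

/-- The global arms at `x`: the connected components of `X \ {x}`. -/
def arms {X : Type*} [TopologicalSpace X] (x : X) : Set (Set X) :=
  {C | ∃ y, y ≠ x ∧ C = connectedComponentIn {x}ᶜ y}

/-- The global arm at `x` containing `y` (for `y ≠ x`): the component of `X \ {x}`
containing `y`.  Local arms at `x` being germs of global arms, we represent the local
arm at `x` pointing towards `y` by this set. -/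
def armTo {X : Type*} [TopologicalSpace X] (x y : X) : Set X :=
  connectedComponentIn {x}ᶜ y

/-- `x` is an endpoint: it has exactly one arm. -/
def IsEndpoint {X : Type*} [TopologicalSpace X] (x : X) : Prop :=
  (arms x).ncard = 1

/-- `x` is a branch point: it has at least three arms. -/
def IsBranchPt {X : Type*} [TopologicalSpace X] (x : X) : Prop :=
  3 ≤ (arms x).ncard

/-- `f` maps the set `A` homeomorphically onto its image. -/
def MapsHomeoOn {X : Type*} [TopologicalSpace X] (f : X → X) (A : Set X) : Prop :=
  Topology.IsEmbedding (A.restrict f)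

/-- `f` is a local homeomorphism onto its image at `x`. -/
def IsLocalHomeoAt {X : Type*} [TopologicalSpace X] (f : X → X) (x : X) : Prop :=
  ∃ U : Set X, IsOpen U ∧ x ∈ U ∧ Topology.IsEmbedding (U.restrict f)

/-- `g` sends the local arm at `x` represented by the global arm `C` to the local
arm at `g x` represented by `C'` (germ condition: some initial piece of `C` at `x`
is mapped into `C'`). -/
def MapsLocalArm {X : Type*} [TopologicalSpace X] (g : X → X) (x : X) (C C' : Set X) : Prop :=
  C ∈ arms x ∧ C' ∈ arms (g x) ∧ ∃ U ∈ nhds x, g '' (C ∩ U) ⊆ C'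

/-- `z` is periodic under `f` with exact period `n`. -/
def ExactPeriod {Y : Type*} (f : Y → Y) (z : Y) (n : ℕ) : Prop :=
  1 ≤ n ∧ f^[n] z = z ∧ ∀ k, 1 ≤ k → k < n → f^[k] z ≠ z

/-- The first return map `f^[n]` of the fixed point `z` of `f^[n]` permutes all the
local arms at `z` transitively in a single cycle. -/
def ArmsTransitive {X : Type*} [TopologicalSpace X] (f : X → X) (n : ℕ) (z : X) : Prop :=
  ∀ C ∈ arms z, ∀ C' ∈ arms z, ∃ j : ℕ, MapsLocalArm (f^[n * j]) z C C'

/-- An (abstract) Hubbard tree: a finite topological tree `X` together with a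
continuous surjection `f` and a critical point `c0`, subject to the axioms of
Bruin–Schleicher. -/
structure HubbardTree (X : Type*) [TopologicalSpace X] : Type _ where
  /-- the dynamics -/
  f : X → X
  /-- the critical point -/
  c0 : X
  compact : CompactSpace X
  t2 : T2Space X
  conn : ConnectedSpace X
  /-- the unique arc `[x,y]` joining two points -/
  arc : X → X → Set X
  arc_isArc : ∀ x y : X, IsArcBetween (arc x y) x y
  arc_unique : ∀ (x y : X) (A : Set X), IsArcBetween A x y → A = arc x y
  -- finiteness of the tree
  arms_finite : ∀ x : X, (arms x).Finite
  branch_finite : Set.Finite {x : X | IsBranchPt x}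
  endpoint_finite : Set.Finite {x : X | IsEndpoint x}
  cont : Continuous f
  surj : Function.Surjective f
  /-- every point has at most two inverse images -/
  two_preimages : ∀ y : X, ∃ a b : X, f ⁻¹' {y} ⊆ {a, b}
  /-- local homeomorphism onto its image away from the critical point -/
  local_homeo : ∀ x : X, x ≠ c0 → IsLocalHomeoAt f x
  /-- all endpoints lie on the critical orbit -/
  endpoints_on_orbit : ∀ x : X, IsEndpoint x → ∃ k : ℕ, f^[k] c0 = x
  /-- the critical point is periodic or preperiodic -/
  crit_preperiodic : ∃ k n : ℕ, 1 ≤ n ∧ f^[k + n] c0 = f^[k] c0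
  /-- the critical point is not fixed -/
  crit_not_fixed : f c0 ≠ c0
  /-- expansivity -/
  expansive : ∀ x y : X, x ≠ y →
    (IsBranchPt x ∨ ∃ k : ℕ, f^[k] c0 = x) →
    (IsBranchPt y ∨ ∃ k : ℕ, f^[k] c0 = y) →
    ∃ n : ℕ, c0 ∈ f^[n] '' (arc x y)

namespace HubbardTree

variable {X : Type*} [TopologicalSpace X] (H : HubbardTree X)

/-- The critical value `c₁ = f(c₀)`. -/
def c1 : X := H.f H.c0

/-- The component `T₁` of `T \ {c₀}` containing the critical value. -/
def T1 : Set X := connectedComponentIn {H.c0}ᶜ H.c1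

open Classical in
/-- The symbol (`0`, `1` or `*`) attached to a point of the tree. -/
noncomputable def symOf (x : X) : Sym :=
  if x = H.c0 then Sym.star else if x ∈ H.T1 then Sym.one else Sym.zero

/-- The itinerary of `x`: a sequence of symbols, 1-indexed (the value at index `0`
is irrelevant); entry `k ≥ 1` is the symbol of `f^[k-1] x`. -/
noncomputable def itin (x : X) : ℕ → Sym :=
  fun k => H.symOf (H.f^[k - 1] x)

/-- The kneading sequence: the itinerary of the critical value (1-indexed). -/
noncomputable def kneading : ℕ → Sym := H.itin H.c1

/-- `z` is the characteristic point of its periodic orbit: `c₁` lies in one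
component of `X \ {z}` while `c₀` and all other points of the orbit lie in a
different component. -/
def IsCharacteristic (z : X) : Prop :=
  ∃ Cv Cz : Set X, Cv ∈ arms z ∧ Cz ∈ arms z ∧ Cv ≠ Cz ∧
    H.c1 ∈ Cv ∧ H.c0 ∈ Cz ∧ ∀ k : ℕ, H.f^[k] z ≠ z → H.f^[k] z ∈ Cz

/-- The first return map fixes the local arm at `z` pointing to the critical point
and permutes all other local arms transitively in a single cycle. -/
def OtherArmsTransitive (n : ℕ) (z : X) : Prop :=
  ∀ C ∈ arms z, C ≠ armTo z H.c0 → ∀ C' ∈ arms z, C' ≠ armTo z H.c0 →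
    ∃ j : ℕ, MapsLocalArm (H.f^[n * j]) z C C'

/-- `z` is the characteristic point of an evil periodic orbit of branch points of
exact period `n`. -/
def IsEvilOrbit (z : X) (n : ℕ) : Prop :=
  ExactPeriod H.f z n ∧ (∀ k : ℕ, IsBranchPt (H.f^[k] z)) ∧
    H.IsCharacteristic z ∧ ¬ ArmsTransitive H.f n z

/-- `x` is precritical with `Step(x) = k`: `k ≥ 1` is minimal with `f^[k] x = c₁`. -/
def Step (x : X) (k : ℕ) : Prop :=
  1 ≤ k ∧ H.f^[k] x = H.c1 ∧ ∀ j, 1 ≤ j → j < k → H.f^[j] x ≠ H.c1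

/-- `x` is the closest precritical point `ζ_k`. -/
def IsClosestPrecritical (x : X) (k : ℕ) : Prop :=
  H.Step x k ∧ ∀ j, 1 ≤ j → j < k → H.c1 ∉ H.f^[j] '' (H.arc H.c1 x)

/-- `x` is the earliest precritical point on the set `A`, with `Step(x) = k`:
it is a precritical point on `A` of minimal Step. -/
def IsEarliestPrecriticalOn (A : Set X) (x : X) (k : ℕ) : Prop :=
  x ∈ A ∧ H.Step x k ∧ ∀ y ∈ A, ∀ j : ℕ, H.Step y j → k ≤ j

/-- Marked points: branch points and points of the critical orbit. -/
def MarkedPt (x : X) : Prop :=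
  IsBranchPt x ∨ ∃ k : ℕ, H.f^[k] H.c0 = x

/-- Two marked points are joined by an edge if the arc between them contains no
further marked point. -/
def IsEdge (x y : X) : Prop :=
  H.MarkedPt x ∧ H.MarkedPt y ∧ x ≠ y ∧
    ∀ w ∈ H.arc x y, H.MarkedPt w → w = x ∨ w = y

/-- Equivalence of Hubbard trees: a bijection between the marked points which
conjugates the dynamics and preserves edges. -/
def Equivalent {Y : Type*} [TopologicalSpace Y] (H' : HubbardTree Y) : Prop :=
  ∃ φ : X → Y,
    (∀ x : X, H.MarkedPt x → H'.MarkedPt (φ x)) ∧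
    (∀ x x' : X, H.MarkedPt x → H.MarkedPt x' → φ x = φ x' → x = x') ∧
    (∀ y : Y, H'.MarkedPt y → ∃ x : X, H.MarkedPt x ∧ φ x = y) ∧
    φ H.c0 = H'.c0 ∧
    (∀ x : X, H.MarkedPt x → φ (H.f x) = H'.f (φ x)) ∧
    (∀ x x' : X, H.MarkedPt x → H.MarkedPt x' →
      (H.IsEdge x x' ↔ H'.IsEdge (φ x) (φ x')))

end HubbardTree

/-! ### Combinatorics of kneading sequences -/

/-- The function `ρ_ν(n) = inf { k > n : ν_k ≠ ν_{k-n} } ∈ ℕ ∪ {∞}` (sequences are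
1-indexed). -/
noncomputable def rho (ν : ℕ → Sym) (n : ℕ) : ℕ∞ :=
  sInf {e : ℕ∞ | ∃ j : ℕ, e = (j : ℕ∞) ∧ n < j ∧ ν j ≠ ν (j - n)}

/-- `RhoOrbit ν k m` means that `m` belongs to the `ρ`-orbit
`k → ρ(k) → ρ(ρ(k)) → ⋯` of `k` (stopped before reaching `∞`). -/
inductive RhoOrbit (ν : ℕ → Sym) : ℕ → ℕ → Prop
  | refl (k : ℕ) : RhoOrbit ν k k
  | step {k m j : ℕ} : RhoOrbit ν k m → rho ν m = (j : ℕ∞) → RhoOrbit ν k j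

/-- `m` occurs in the internal address `1 → ρ(1) → ρ(ρ(1)) → ⋯` of `ν`. -/
def InternalAddress (ν : ℕ → Sym) (m : ℕ) : Prop := RhoOrbit ν 1 m

/-- `ν` is a `*`-periodic kneading sequence of (exact) period `n`:
`ν = overline(1 ν₂ … ν_{n-1} *)`. -/
def StarPeriodic (ν : ℕ → Sym) (n : ℕ) : Prop :=
  2 ≤ n ∧ ν 1 = Sym.one ∧ ν n = Sym.star ∧
    (∀ k, 1 ≤ k → ν (k + n) = ν k) ∧
    (∀ k, 1 ≤ k → k < n → ν k ≠ Sym.star)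

/-- `ν` fails the admissibility condition for period `m`. -/
def FailsAdmissibility (ν : ℕ → Sym) (m : ℕ) : Prop :=
  1 ≤ m ∧
  ¬ InternalAddress ν m ∧
  (∀ k : ℕ, k ∣ m → 1 ≤ k → k < m → rho ν k ≤ (m : ℕ∞)) ∧
  ∃ R r : ℕ, rho ν m = (R : ℕ∞) ∧ 1 ≤ r ∧ r ≤ m ∧ r ≡ R [MOD m] ∧ RhoOrbit ν r m

open Classical in
/-- The number `q(m)` of arms predicted by the kneading sequence, where
`ρ(m) = R < ∞` and `r ∈ {1,…,m}` is congruent to `R` modulo `m`. -/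
noncomputable def qArms (ν : ℕ → Sym) (m R r : ℕ) : ℕ :=
  if RhoOrbit ν r m then (R - r) / m + 1 else (R - r) / m + 2


/-! ### Embeddings into the plane and cyclic order of arms -/

/-- Three points in the plane are in (strictly) counterclockwise position. -/
def Ccw (p q r : ℝ × ℝ) : Prop :=
  0 < (q.1 - p.1) * (r.2 - p.2) - (q.2 - p.2) * (r.1 - p.1)

namespace HubbardTree

variable {X : Type*} [TopologicalSpace X] (H : HubbardTree X)

/-- Under an embedding `φ` of the tree into the plane, `p` is a first exit point of
the arm `C` at `x` through the circle of radius `ε` around `φ x`: `p = φ y` for a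
point `y ∈ C` at distance exactly `ε`, such that the arc from `x` to `y` stays
within distance `< ε` before reaching `y`. -/
def ExitPt (φ : X → ℝ × ℝ) (x : X) (C : Set X) (ε : ℝ) (p : ℝ × ℝ) : Prop :=
  ∃ y ∈ C, φ y = p ∧ dist (φ x) p = ε ∧
    ∀ z ∈ H.arc x y, z ≠ y → dist (φ x) (φ z) < ε

/-- The local arms at `x` represented by the arms `C, C', C''` are in
counterclockwise cyclic order under the embedding `φ`. -/
def ArmsCcw (φ : X → ℝ × ℝ) (x : X) (C C' C'' : Set X) : Prop :=
  ∃ ε₀ : ℝ, 0 < ε₀ ∧ ∀ ε : ℝ, 0 < ε → ε < ε₀ →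
    ∀ p p' p'' : ℝ × ℝ, H.ExitPt φ x C ε p → H.ExitPt φ x C' ε p' →
      H.ExitPt φ x C'' ε p'' → Ccw p p' p''

/-- `f` respects the cyclic order (induced by the embedding `φ`) of the local arms
at all branch points. -/
def RespectsCyclicOrder (φ : X → ℝ × ℝ) : Prop :=
  ∀ x : X, IsBranchPt x →
    ∀ C C' C'' : Set X, C ∈ arms x → C' ∈ arms x → C'' ∈ arms x →
      C ≠ C' → C' ≠ C'' → C ≠ C'' → H.ArmsCcw φ x C C' C'' →
      ∀ D D' D'' : Set X, MapsLocalArm H.f x C D → MapsLocalArm H.f x C' D' →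
        MapsLocalArm H.f x C'' D'' → H.ArmsCcw φ (H.f x) D D' D''

/-- The Hubbard tree can be topologically embedded into the plane `ℝ²` so that `f`
respects the cyclic order of the local arms at all branch points. -/
def PlanarEmbeddable : Prop :=
  ∃ φ : X → ℝ × ℝ, Topology.IsEmbedding φ ∧ H.RespectsCyclicOrder φ

end HubbardTree

/-!
Every marked point is the median of three points of the critical orbit, that is, the centre of the
tripod they span. If the legs of a tripod are truncated at the critical point, `f` is injective on
it, so it maps the median of the truncated endpoints to the median of their images. The symbol of a
median is the majority symbol of the three endpoints, because the critical point has at most two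
arms. By induction along the orbit, the itinerary of a median depends only on the three itineraries
and the kneading sequence. As expansivity makes the itinerary injective on marked points, matching
marked points with equal itineraries gives a bijection; it preserves edges, since a point lies on
the arc from `x` to `y` exactly if it is its own median with `x` and `y`.
-/

open Set Topology

/-! ### Arms and separation -/

section Arms

variable {X : Type*} [TopologicalSpace X] {a b c e r v w y z : X}

theorem armTo_self (a : X) : armTo a a = ∅ :=
  connectedComponentIn_eq_empty (by simp)

theorem mem_armTo_self (h : r ≠ a) : r ∈ armTo a r :=
  mem_connectedComponentIn h

theorem self_notMem_armTo (a r : X) : a ∉ armTo a r :=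
  fun h => connectedComponentIn_subset _ _ h rfl

theorem ne_of_mem_armTo (h : z ∈ armTo a r) : r ≠ a := by
  rintro rfl
  simp only [armTo_self, mem_empty_iff_false] at h

theorem armTo_eq_of_mem (h : z ∈ armTo a r) : armTo a r = armTo a z :=
  connectedComponentIn_eq h

theorem mem_armTo_comm (h : z ∈ armTo a r) : r ∈ armTo a z :=
  armTo_eq_of_mem h ▸ mem_armTo_self (ne_of_mem_armTo h)

theorem subset_armTo {S : Set X} (hS : IsPreconnected S) (hr : r ∈ S) (ha : a ∉ S) :
    S ⊆ armTo a r :=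
  hS.subset_connectedComponentIn hr (subset_compl_singleton_iff.2 ha)

theorem closure_armTo_subset (a r : X) : closure (armTo a r) ⊆ insert a (armTo a r) := by
  intro z hz
  by_cases hza : z = a
  · exact Or.inl hza
  have hra : r ≠ a := by
    rintro rfl
    simp only [armTo_self, closure_empty, mem_empty_iff_false] at hz
  have hpre : IsPreconnected (insert z (armTo a r)) :=
    isPreconnected_connectedComponentIn.subset_closure (subset_insert _ _)
      (insert_subset hz subset_closure)
  refine Or.inr (subset_armTo hpre (Or.inr (mem_armTo_self hra)) ?_ (Or.inl rfl))
  rintro (h | h)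
  exacts [hza h.symm, self_notMem_armTo a r h]

theorem armTo_eq_compl_biUnion_closure (h : r ≠ a) :
    armTo a r = (insert a (⋃ C ∈ arms a \ {armTo a r}, closure C))ᶜ := by
  ext z
  simp only [mem_compl_iff, mem_insert_iff, mem_iUnion, not_or]
  constructor
  · refine fun hz => ⟨fun hza => self_notMem_armTo a r (hza ▸ hz), ?_⟩
    rintro ⟨_, ⟨⟨y, -, rfl⟩, hne⟩, hzy⟩
    rcases closure_armTo_subset a y hzy with rfl | hzy
    · exact self_notMem_armTo _ _ hz
    · exact hne ((armTo_eq_of_mem hzy).trans (armTo_eq_of_mem hz).symm)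
  · rintro ⟨hza, hz⟩
    by_contra hzr
    refine hz ⟨armTo a z, ⟨⟨z, hza, rfl⟩, fun heq => hzr ?_⟩, subset_closure (mem_armTo_self hza)⟩
    exact mem_singleton_iff.1 heq ▸ mem_armTo_self hza

theorem isOpen_armTo [T1Space X] (ha : (arms a).Finite) (r : X) : IsOpen (armTo a r) := by
  by_cases hra : r = a
  · rw [hra, armTo_self]
    exact isOpen_empty
  rw [armTo_eq_compl_biUnion_closure hra, isOpen_compl_iff, insert_eq]
  exact isClosed_singleton.union
    ((ha.subset sdiff_subset).isClosed_biUnion fun _ _ => isClosed_closure)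

theorem mem_closure_armTo [T1Space X] [ConnectedSpace X] (ha : (arms a).Finite) (h : r ≠ a) :
    a ∈ closure (armTo a r) := by
  by_contra hcon
  have hcl : IsClosed (armTo a r) := closure_subset_iff_isClosed.1 fun z hz =>
    (closure_armTo_subset a r hz).resolve_left fun hza => hcon (hza ▸ hz)
  rcases isClopen_iff.1 ⟨hcl, isOpen_armTo ha r⟩ with hempty | huniv
  · exact (hempty ▸ mem_armTo_self h : r ∈ (∅ : Set X))
  · exact self_notMem_armTo a r (huniv ▸ mem_univ a)

theorem isPreconnected_insert_armTo [T1Space X] [ConnectedSpace X] (ha : (arms a).Finite)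
    (h : r ≠ a) : IsPreconnected (insert a (armTo a r)) :=
  isPreconnected_connectedComponentIn.subset_closure (subset_insert _ _)
    (insert_subset (mem_closure_armTo ha h) subset_closure)

theorem isEndpoint_iff (h : r ≠ a) : IsEndpoint a ↔ ∀ y ≠ a, y ∈ armTo a r := by
  have hmem : armTo a r ∈ arms a := ⟨r, h, rfl⟩
  rw [IsEndpoint, ncard_eq_one]
  constructor
  · rintro ⟨C, hC⟩ y hy
    have hyr : armTo a y = armTo a r := by
      have hyC : armTo a y ∈ arms a := ⟨y, hy, rfl⟩
      rw [hC, mem_singleton_iff] at hyC hmem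
      rw [hyC, hmem]
    exact hyr ▸ mem_armTo_self hy
  · refine fun hall => ⟨armTo a r, subset_antisymm ?_ (singleton_subset_iff.2 hmem)⟩
    rintro _ ⟨y, hy, rfl⟩
    exact (armTo_eq_of_mem (hall y hy)).symm

/-- `a` separates `r` from `b`, or is one of the two points. On a tree this says that `a` is on the
arc from `r` to `b`; for a fixed root `r` it is a partial order `a ≤ b`. -/
def Separates (a r b : X) : Prop :=
  b ∉ armTo a r

theorem Separates.refl (a r : X) : Separates a r a :=
  self_notMem_armTo a r

theorem Separates.symm (h : Separates a r b) : Separates a b r :=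
  fun hr => h (mem_armTo_comm hr)

theorem Separates.trans (hab : Separates a r b) (hbc : Separates b r c) : Separates a r c :=
  fun hc => hbc (subset_armTo isPreconnected_connectedComponentIn
    (mem_armTo_self (ne_of_mem_armTo hc)) hab hc)

theorem separates_iff_armTo_ne (h : b ≠ a) : Separates a r b ↔ armTo a r ≠ armTo a b :=
  ⟨fun hab heq => hab (heq ▸ mem_armTo_self h), fun hne hb => hne (armTo_eq_of_mem hb)⟩

theorem separates_of_mem_armTo (hw : w ∈ armTo v r) (he : Separates v r e) : Separates v e w :=
  fun hwe => he (armTo_eq_of_mem hw ▸ mem_armTo_comm hwe)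

variable [T1Space X]

section Order

variable [ConnectedSpace X]

theorem Separates.antisymm (ha : (arms a).Finite) (hab : Separates a r b)
    (hba : Separates b r a) : a = b := by
  by_contra hne
  by_cases hra : r = a
  · exact hba (hra ▸ mem_armTo_self (hra ▸ hne))
  refine hba (subset_armTo (isPreconnected_insert_armTo ha hra)
    (Or.inr (mem_armTo_self hra)) ?_ (Or.inl rfl))
  rintro (h | h)
  exacts [hne h.symm, hab h]

theorem Separates.total (hv : (arms v).Finite) (hve : Separates v r e) (hwe : Separates w r e) :
    Separates v r w ∨ Separates w r v := by
  by_contra! h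
  obtain ⟨hvw, hwv⟩ := h
  simp only [Separates, not_not] at hvw hwv
  have heq : v = w := Separates.antisymm hv (separates_of_mem_armTo hvw hve)
    (separates_of_mem_armTo hwv hwe)
  exact self_notMem_armTo v r (heq ▸ hvw)

/-- The partial order on a tree rooted at `r`: smaller points are closer to the root. -/
abbrev rootedOrder (hfin : ∀ x : X, (arms x).Finite) (r : X) : PartialOrder X where
  le a b := Separates a r b
  le_refl a := Separates.refl a r
  le_trans _ _ _ := Separates.trans
  le_antisymm a _ := Separates.antisymm (hfin a)

end Order

theorem exists_maximal_of_isCompact {α : Type*} [TopologicalSpace α] [Preorder α]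
    [ClosedIciTopology α] {K : Set α} (hK : IsCompact K) (hne : K.Nonempty) :
    ∃ q, Maximal (· ∈ K) q := by
  have hchain : ∀ c ⊆ K, IsChain (· ≤ ·) c → ∀ y ∈ c, ∃ ub ∈ K, ∀ z ∈ c, z ≤ ub := by
    intro c hcK hc y hy
    have : Nonempty c := ⟨⟨y, hy⟩⟩
    obtain ⟨ub, hubK, hub⟩ := hK.inter_iInter_nonempty (fun a : c => Ici (a : α))
      (fun _ => isClosed_Ici) (fun u => by
        obtain ⟨z, hz⟩ := (directedOn_iff_directed.1 hc.directedOn).finset_le u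
        exact ⟨z, hcK z.2, mem_iInter₂.2 hz⟩)
    exact ⟨ub, hubK, fun z hz => mem_iInter.1 hub ⟨z, hz⟩⟩
  obtain ⟨x, hx⟩ := hne
  obtain ⟨q, -, hq⟩ := zorn_le_nonempty₀ K hchain x hx
  exact ⟨q, hq⟩

variable [ConnectedSpace X]

theorem exists_forall_separates_imp_eq (hfin : ∀ x : X, (arms x).Finite) (r : X) {K : Set X}
    (hK : IsCompact K) (hne : K.Nonempty) :
    ∃ q ∈ K, ∀ b ∈ K, Separates q r b → b = q := by
  let := rootedOrder hfin r
  have : ClosedIciTopology X := ⟨fun a => (isOpen_armTo (hfin a) r).isClosed_compl⟩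
  obtain ⟨q, hq⟩ := exists_maximal_of_isCompact hK hne
  exact ⟨q, hq.prop, fun b hb hqb => (hq.eq_of_le hb hqb).symm⟩

variable [CompactSpace X]

theorem exists_isEndpoint_separates (hfin : ∀ x : X, (arms x).Finite) (h : w ≠ r) :
    ∃ e, IsEndpoint e ∧ Separates w r e := by
  obtain ⟨q, hwq, hq⟩ := exists_forall_separates_imp_eq hfin r
    (isOpen_armTo (hfin w) r).isClosed_compl.isCompact ⟨w, Separates.refl w r⟩
  have hrq : r ≠ q := by
    rintro rfl
    exact hwq (mem_armTo_self h.symm)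
  refine ⟨q, (isEndpoint_iff hrq).2 fun y hy => ?_, hwq⟩
  by_contra hqy
  exact hy (hq y (Separates.trans hwq hqy) hqy)

theorem exists_isEndpoint_mem_armTo (hfin : ∀ x : X, (arms x).Finite) (h : r ≠ a) :
    ∃ e ∈ armTo a r, IsEndpoint e := by
  obtain ⟨e, he, hre⟩ := exists_isEndpoint_separates hfin h
  refine ⟨e, ?_, he⟩
  by_contra hae
  exact h ((Separates.antisymm (hfin a) (Separates.symm hae) hre.symm).symm)

theorem finite_of_pairwise_mem_armTo (hfin : ∀ x : X, (arms x).Finite)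
    (hend : {x : X | IsEndpoint x}.Finite) {S : Set X} (hr : r ∉ S)
    (hS : S.Pairwise fun v w => w ∈ armTo v r) : S.Finite := by
  choose! e he using fun (w : X) (h : w ≠ r) => exists_isEndpoint_separates hfin h
  have hne : ∀ w ∈ S, w ≠ r := fun w hw => ne_of_mem_of_not_mem hw hr
  refine Finite.of_injOn (f := e) (fun w hw => (he w (hne w hw)).1) ?_ hend
  intro v hv w hw hvw
  by_contra hne'
  rcases Separates.total (hfin v) (he v (hne v hv)).2 (hvw ▸ (he w (hne w hw)).2) with h | h
  exacts [h (hS hv hw hne'), h (hS hw hv (Ne.symm hne'))]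

end Arms

/-! ### Arcs and medians -/

/-- `arc x y` is the only arc joining `x` and `y`, for all points `x` and `y`. -/
structure UniqueArcs {X : Type*} [TopologicalSpace X] (arc : X → X → Set X) : Prop where
  isArcBetween : ∀ x y, IsArcBetween (arc x y) x y
  eq_arc : ∀ x y A, IsArcBetween A x y → A = arc x y

/-- The median of `x`, `y` and `z`: the centre of the tripod that they span. -/
def IsMedian {X : Type*} (arc : X → X → Set X) (x y z m : X) : Prop :=
  m ∈ arc x y ∧ m ∈ arc y z ∧ m ∈ arc z x

theorem isArcBetween_image_Icc {X : Type*} [TopologicalSpace X] [T2Space X] {γ : ℝ → X} {a b : ℝ}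
    (hab : a ≤ b) (hγ : Continuous γ) (hinj : InjOn γ (Icc a b)) :
    IsArcBetween (γ '' Icc a b) (γ a) (γ b) := by
  rcases hab.eq_or_lt with rfl | hlt
  · exact Or.inl ⟨rfl, by rw [Icc_self, image_singleton]⟩
  let e := (iccHomeoI a b hlt).symm
  let p : Path (γ a) (γ b) :=
    { toFun := fun t => γ (e t)
      continuous_toFun := by fun_prop
      source' := by simp [e]
      target' := by simp [e] }
  have hp : Function.Injective p := fun s t hst =>
    e.injective (Subtype.ext (hinj (e s).2 (e t).2 hst))
  refine Or.inr ⟨fun h => hlt.ne (hinj (left_mem_Icc.2 hab) (right_mem_Icc.2 hab) h),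
    p, (p.continuous.isClosedEmbedding hp).isEmbedding, ?_⟩
  change range (γ ∘ Subtype.val ∘ e) = γ '' Icc a b
  rw [range_comp, e.surjective.range_comp, Subtype.range_val]

namespace UniqueArcs

variable {X : Type*} [TopologicalSpace X] {arc : X → X → Set X} {a b c m u w x y z : X}

theorem self (hT : UniqueArcs arc) (x : X) : arc x x = {x} :=
  (hT.eq_arc _ _ _ (Or.inl ⟨rfl, rfl⟩)).symm

theorem exists_param (hT : UniqueArcs arc) (s : ℝ) (x y : X) : ∃ (γ : ℝ → X) (t : ℝ),
    s ≤ t ∧ Continuous γ ∧ InjOn γ (Icc s t) ∧ γ s = x ∧ γ t = y := by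
  rcases hT.isArcBetween x y with ⟨rfl, -⟩ | ⟨-, p, hp, -⟩
  · exact ⟨fun _ => x, s, le_rfl, continuous_const, by simp, rfl, rfl⟩
  refine ⟨fun t => p.extend (t - s), s + 1, by linarith, by fun_prop, ?_, by simp, by simp⟩
  have hinj : InjOn p.extend (Icc 0 1) := fun t ht t' ht' h => by
    rw [p.extend_apply ht, p.extend_apply ht'] at h
    exact congrArg Subtype.val (hp.injective h)
  refine hinj.comp sub_left_injective.injOn fun t ht => ⟨?_, ?_⟩ <;> linarith [ht.1, ht.2]

variable [T2Space X]

theorem image_Icc (hT : UniqueArcs arc) {γ : ℝ → X} {a b : ℝ} (hab : a ≤ b) (hγ : Continuous γ)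
    (hinj : InjOn γ (Icc a b)) : γ '' Icc a b = arc (γ a) (γ b) :=
  hT.eq_arc _ _ _ (isArcBetween_image_Icc hab hγ hinj)

theorem left_mem (hT : UniqueArcs arc) (x y : X) : x ∈ arc x y := by
  obtain ⟨γ, b, hb, hγ, hinj, rfl, rfl⟩ := hT.exists_param 0 x y
  exact hT.image_Icc hb hγ hinj ▸ mem_image_of_mem γ (left_mem_Icc.2 hb)

theorem comm (hT : UniqueArcs arc) (x y : X) : arc x y = arc y x := by
  obtain ⟨γ, b, hb, hγ, hinj, rfl, rfl⟩ := hT.exists_param 0 x y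
  have hrev := hT.image_Icc (γ := fun t => γ (b - t)) hb (by fun_prop)
    (hinj.comp sub_right_injective.injOn fun t ht => ⟨by linarith [ht.2], by linarith [ht.1]⟩)
  rw [← image_image γ, image_const_sub_Icc, sub_self, sub_zero] at hrev
  rw [← hrev, hT.image_Icc hb hγ hinj]

theorem right_mem (hT : UniqueArcs arc) (x y : X) : y ∈ arc x y :=
  hT.comm y x ▸ hT.left_mem y x

theorem isPreconnected (hT : UniqueArcs arc) (x y : X) : IsPreconnected (arc x y) := by
  obtain ⟨γ, b, hb, hγ, hinj, rfl, rfl⟩ := hT.exists_param 0 x y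
  exact hT.image_Icc hb hγ hinj ▸ isPreconnected_Icc.image γ hγ.continuousOn

theorem isCompact (hT : UniqueArcs arc) (x y : X) : IsCompact (arc x y) := by
  obtain ⟨γ, b, hb, hγ, hinj, rfl, rfl⟩ := hT.exists_param 0 x y
  exact hT.image_Icc hb hγ hinj ▸ isCompact_Icc.image hγ

theorem infinite (hT : UniqueArcs arc) (h : x ≠ y) : (arc x y).Infinite := by
  obtain ⟨γ, b, hb, hγ, hinj, rfl, rfl⟩ := hT.exists_param 0 x y
  have hlt : 0 < b := hb.lt_of_ne (by rintro rfl; exact h rfl)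
  exact hT.image_Icc hb hγ hinj ▸ (Icc_infinite hlt).image hinj

theorem image_arc {Y : Type*} [TopologicalSpace Y] [T2Space Y] {arc' : Y → Y → Set Y}
    (hT : UniqueArcs arc) (hT' : UniqueArcs arc') {f : X → Y} (hf : Continuous f)
    (hinj : InjOn f (arc x y)) : f '' arc x y = arc' (f x) (f y) := by
  obtain ⟨γ, b, hb, hγ, hγinj, rfl, rfl⟩ := hT.exists_param 0 x y
  rw [← hT.image_Icc hb hγ hγinj] at hinj ⊢
  rw [← image_comp]
  exact hT'.image_Icc hb (hf.comp hγ) (hinj.comp hγinj (mapsTo_image γ _))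

theorem split (hT : UniqueArcs arc) (hz : z ∈ arc x y) :
    arc x y = arc x z ∪ arc z y ∧ arc x z ∩ arc z y = {z} := by
  obtain ⟨γ, b, hb, hγ, hinj, rfl, rfl⟩ := hT.exists_param 0 x y
  rw [← hT.image_Icc hb hγ hinj] at hz ⊢
  obtain ⟨t, ht, rfl⟩ := hz
  have hleft : Icc 0 t ⊆ Icc 0 b := Icc_subset_Icc_right ht.2
  have hright : Icc t b ⊆ Icc 0 b := Icc_subset_Icc_left ht.1
  rw [← hT.image_Icc ht.1 hγ (hinj.mono hleft), ← hT.image_Icc ht.2 hγ (hinj.mono hright)]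
  constructor
  · rw [← image_union, Icc_union_Icc_eq_Icc ht.1 ht.2]
  · rw [← hinj.image_inter hleft hright, Icc_inter_Icc_eq_singleton ht.1 ht.2, image_singleton]

theorem mem_or_mem (hT : UniqueArcs arc) (hz : z ∈ arc x y) (hw : w ∈ arc x y) :
    w ∈ arc x z ∨ w ∈ arc z y := by
  rwa [(hT.split hz).1] at hw

theorem eq_of_mem (hT : UniqueArcs arc) (hz : z ∈ arc x y) (hxz : w ∈ arc x z)
    (hzy : w ∈ arc z y) : w = z := by
  have hw : w ∈ arc x z ∩ arc z y := ⟨hxz, hzy⟩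
  rwa [(hT.split hz).2] at hw

theorem subset_left (hT : UniqueArcs arc) (hz : z ∈ arc x y) : arc x z ⊆ arc x y :=
  (hT.split hz).1 ▸ subset_union_left

theorem subset_right (hT : UniqueArcs arc) (hz : z ∈ arc x y) : arc z y ⊆ arc x y :=
  (hT.split hz).1 ▸ subset_union_right

theorem antisymm (hT : UniqueArcs arc) (hm : m ∈ arc x c) (hc : c ∈ arc x m) : m = c :=
  hT.eq_of_mem hc hm (hT.right_mem c m)

theorem mem_of_left_mem (hT : UniqueArcs arc) (hm : m ∈ arc x y) (hc : c ∈ arc x m) :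
    m ∈ arc c y :=
  (hT.mem_or_mem (hT.subset_left hm hc) hm).elim
    (fun h => hT.antisymm h hc ▸ hT.left_mem m y) id

theorem mem_of_right_mem (hT : UniqueArcs arc) (hm : m ∈ arc x y) (hc : c ∈ arc m y) :
    m ∈ arc x c := by
  rw [hT.comm] at hm hc ⊢
  exact hT.mem_of_left_mem hm hc

theorem total (hT : UniqueArcs arc) (hm : m ∈ arc x y) (hc : c ∈ arc x y) :
    c ∈ arc x m ∨ m ∈ arc x c :=
  (hT.mem_or_mem hm hc).imp_right (hT.mem_of_right_mem hm)

theorem exists_first_mem (hT : UniqueArcs arc) {K : Set X} (hK : IsClosed K) (hx : x ∈ K) :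
    ∃ p ∈ K, p ∈ arc z x ∧ ∀ w ∈ arc z p, w ∈ K → w = p := by
  obtain ⟨γ, b, hb, hγ, hinj, rfl, rfl⟩ := hT.exists_param 0 z x
  obtain ⟨t, ⟨ht, htK⟩, hmin⟩ :=
    (isCompact_Icc.inter_right (hK.preimage hγ)).exists_isLeast ⟨b, right_mem_Icc.2 hb, hx⟩
  refine ⟨γ t, htK, hT.image_Icc hb hγ hinj ▸ mem_image_of_mem γ ht, ?_⟩
  rw [← hT.image_Icc ht.1 hγ (hinj.mono (Icc_subset_Icc_right ht.2))]
  rintro _ ⟨s, hs, rfl⟩ hsK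
  rw [le_antisymm hs.2 (hmin ⟨⟨hs.1, hs.2.trans ht.2⟩, hsK⟩)]

theorem mem_of_inter_subset (hT : UniqueArcs arc) (h : arc x z ∩ arc z y ⊆ {z}) : z ∈ arc x y := by
  obtain ⟨γ, b, hb, hγ, hγinj, rfl, hγb⟩ := hT.exists_param 0 x z
  obtain ⟨δ, d, hd, hδ, hδinj, hδb, rfl⟩ := hT.exists_param b z y
  rw [← hγb] at h hδb ⊢
  rw [← hT.image_Icc hb hγ hγinj, ← hδb, ← hT.image_Icc hd hδ hδinj] at h
  let η : ℝ → X := fun t => if t ≤ b then γ t else δ t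
  have hηγ : ∀ t ≤ b, η t = γ t := fun t ht => if_pos ht
  have hηδ : ∀ t, b ≤ t → η t = δ t := fun t ht => by
    rcases ht.eq_or_lt with rfl | ht
    · rw [hηγ b le_rfl, hδb]
    · exact if_neg ht.not_ge
  have hη : Continuous η := hγ.if_le hδ continuous_id continuous_const
    (by rintro t rfl; exact hδb.symm)
  have hcross : ∀ s ∈ Icc 0 b, ∀ t ∈ Icc b d, η s = η t → s = t := fun s hs t ht hst => by
    rw [hηγ s hs.2, hηδ t ht.1] at hst
    have hsb : γ s = δ b := h ⟨mem_image_of_mem γ hs, hst ▸ mem_image_of_mem δ ht⟩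
    rw [hγinj hs (right_mem_Icc.2 hb) (hsb.trans hδb),
      hδinj ht (left_mem_Icc.2 hd) (hst.symm.trans hsb)]
  have hηinj : InjOn η (Icc 0 d) := fun s hs t ht hst => by
    rcases le_total s b with hsb | hbs <;> rcases le_total t b with htb | hbt
    · exact hγinj ⟨hs.1, hsb⟩ ⟨ht.1, htb⟩ (hηγ s hsb ▸ hηγ t htb ▸ hst)
    · exact hcross s ⟨hs.1, hsb⟩ t ⟨hbt, ht.2⟩ hst
    · exact (hcross t ⟨ht.1, htb⟩ s ⟨hbs, hs.2⟩ hst.symm).symm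
    · exact hδinj ⟨hbs, hs.2⟩ ⟨hbt, ht.2⟩ (hηδ s hbs ▸ hηδ t hbt ▸ hst)
  rw [← hηγ 0 hb, ← hηγ b le_rfl, ← hηδ d hd, ← hT.image_Icc (hb.trans hd) hη hηinj]
  exact mem_image_of_mem η ⟨hb, hd⟩

theorem exists_isMedian (hT : UniqueArcs arc) (x y z : X) : ∃ m, IsMedian arc x y z m := by
  obtain ⟨p, hp, -, hfirst⟩ :=
    hT.exists_first_mem (z := z) (hT.isCompact x y).isClosed (hT.left_mem x y)
  refine ⟨p, hp, ?_, hT.mem_of_inter_subset fun w hw => ?_⟩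
  · rw [hT.comm]
    exact hT.mem_of_inter_subset fun w hw => hfirst w hw.1 (hT.subset_right hp hw.2)
  · exact hfirst w hw.1 (hT.subset_left hp (hT.comm p x ▸ hw.2))

theorem arc_subset_union (hT : UniqueArcs arc) (x y z : X) : arc x z ⊆ arc x y ∪ arc y z := by
  obtain ⟨m, hxy, hyz, hzx⟩ := hT.exists_isMedian x y z
  rw [(hT.split (hT.comm z x ▸ hzx)).1]
  exact union_subset_union (hT.subset_left hxy) (hT.subset_right hyz)

theorem arc_subset (hT : UniqueArcs arc) (ha : a ∈ arc x y) (hb : b ∈ arc x y) :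
    arc a b ⊆ arc x y :=
  (hT.arc_subset_union a x b).trans
    (union_subset (hT.comm x a ▸ hT.subset_left ha) (hT.subset_left hb))

theorem eq_or_eq_of_left_mem (hT : UniqueArcs arc) (ha : a ∈ arc x y) (hb : b ∈ arc x y)
    (hx : x ∈ arc a b) : x = a ∨ x = b := by
  rcases hT.total ha hb with h | h
  · exact Or.inr (hT.antisymm hx (hT.comm x a ▸ h))
  · exact Or.inl (hT.antisymm (hT.comm a b ▸ hx) (hT.comm x b ▸ h))

theorem exists_arc_subset_of_mem_nhds (hT : UniqueArcs arc) (hu : u ∈ arc x y) (hux : u ≠ x)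
    (huy : u ≠ y) {U : Set X} (hU : U ∈ 𝓝 u) : ∃ v w, v ≠ u ∧ w ≠ u ∧ u ∈ arc v w ∧
      arc v w ⊆ U ∧ arc v w ⊆ arc x y := by
  obtain ⟨γ, b, hb, hγ, hinj, rfl, rfl⟩ := hT.exists_param 0 x y
  rw [← hT.image_Icc hb hγ hinj] at hu ⊢
  obtain ⟨t, ht, rfl⟩ := hu
  have h0t : 0 < t := ht.1.lt_of_ne fun h => hux (h ▸ rfl)
  have htb : t < b := ht.2.lt_of_ne fun h => huy (h ▸ rfl)
  obtain ⟨ε, hε, hsub⟩ := (nhds_basis_Icc_pos t).mem_iff.1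
    (Filter.inter_mem (hγ.continuousAt.preimage_mem_nhds hU) (Icc_mem_nhds h0t htb))
  rw [subset_inter_iff] at hsub
  have hv : t - ε ∈ Icc (t - ε) (t + ε) := ⟨le_rfl, by linarith⟩
  have hw : t + ε ∈ Icc (t - ε) (t + ε) := ⟨by linarith, le_rfl⟩
  have harc := hT.image_Icc (hv.2 : t - ε ≤ t + ε) hγ (hinj.mono hsub.2)
  refine ⟨γ (t - ε), γ (t + ε), fun h => ?_, fun h => ?_, ?_, ?_, ?_⟩
  · linarith [hinj (hsub.2 hv) ht h]
  · linarith [hinj (hsub.2 hw) ht h]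
  · exact harc ▸ mem_image_of_mem γ ⟨by linarith, by linarith⟩
  · exact harc ▸ image_subset_iff.2 hsub.1
  · exact harc ▸ image_mono hsub.2

end UniqueArcs

namespace IsMedian

variable {X : Type*} [TopologicalSpace X] [T2Space X] {arc : X → X → Set X} {m m' x y z : X}

theorem unique (hT : UniqueArcs arc) (h : IsMedian arc x y z m) (h' : IsMedian arc x y z m') :
    m' = m := by
  have key : ∀ u v, m ∈ arc u v → m' ∈ arc u m → m' ∈ arc v m → m' = m :=
    fun u v huv hu hv => hT.eq_of_mem huv hu (hT.comm v m ▸ hv)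
  have hx := hT.mem_or_mem h.1 h'.1
  have hy := hT.mem_or_mem h.2.1 h'.2.1
  have hz := hT.mem_or_mem h.2.2 h'.2.2
  rw [hT.comm m] at hx hy hz
  -- `m'` lies on two of the three legs of the tripod with centre `m`.
  rcases hx with hx | hx <;> rcases hy with hy | hy <;> rcases hz with hz | hz
  exacts [key x y h.1 hx hy, key x y h.1 hx hy, key z x h.2.2 hz hx, key z x h.2.2 hy hx,
    key y z h.2.1 hx hz, key x y h.1 hz hx, key y z h.2.1 hx hz, key y z h.2.1 hx hy]

end IsMedian

/-- A finite topological tree, for which `arc x y` is the arc joining `x` and `y`. -/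
structure IsFiniteTree {X : Type*} [TopologicalSpace X] (arc : X → X → Set X) : Prop
    extends UniqueArcs arc where
  arms_finite : ∀ x : X, (arms x).Finite
  endpoint_finite : {x : X | IsEndpoint x}.Finite

namespace IsFiniteTree

variable {X : Type*} [TopologicalSpace X] [T2Space X] {arc : X → X → Set X} {a b m r x y z : X}

theorem mem_arc_of_separates (hT : IsFiniteTree arc) (h : Separates a r b) : a ∈ arc r b := by
  by_contra ha
  exact h (subset_armTo (hT.isPreconnected r b) (hT.left_mem r b) ha (hT.right_mem r b))

variable [CompactSpace X] [ConnectedSpace X]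

theorem finite_not_separates (hT : IsFiniteTree arc) (x y : X) :
    {w ∈ arc x y | w ≠ x ∧ ¬ Separates w x y}.Finite := by
  refine finite_of_pairwise_mem_armTo (r := x) hT.arms_finite hT.endpoint_finite
    (fun h => h.2.1 rfl) ?_
  rintro v ⟨-, -, hv⟩ w ⟨hw, -⟩ hvw
  simp only [Separates, not_not] at hv
  by_contra hxw
  have hwy : v ∈ arc w y := hT.mem_arc_of_separates (separates_of_mem_armTo hv hxw)
  exact hvw (hT.eq_of_mem hw (hT.mem_arc_of_separates hxw) hwy)

theorem exists_separates (hT : IsFiniteTree arc) (h : x ≠ y) :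
    ∃ w ∈ arc x y, w ≠ x ∧ w ≠ y ∧ Separates w x y := by
  obtain ⟨w, hw, hwn⟩ := (hT.infinite h).exists_notMem_finite
    ((hT.finite_not_separates x y).union (toFinite {x, y}))
  simp only [mem_union, mem_ofPred_eq, mem_insert_iff, mem_singleton_iff, not_or, not_and,
    not_not] at hwn
  exact ⟨w, hw, hwn.2.1, hwn.2.2, hwn.1 hw hwn.2.1⟩

theorem eventually_notMem_arc (hT : IsFiniteTree arc) (h : z ≠ a) : ∀ᶠ v in 𝓝 z, a ∉ arc z v := by
  obtain ⟨w, hw, hwz, hwa, hsep⟩ := hT.exists_separates h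
  filter_upwards [(isOpen_armTo (hT.arms_finite w) z).mem_nhds (mem_armTo_self hwz.symm)]
    with v hv hav
  exact hwa (hT.eq_of_mem hav hw
    (hT.mem_arc_of_separates (separates_of_mem_armTo hv hsep)))

theorem separates_iff_mem_arc (hT : IsFiniteTree arc) : Separates a r b ↔ a ∈ arc r b := by
  refine ⟨hT.mem_arc_of_separates, fun ha hb => ?_⟩
  have hne : ∀ u ∈ armTo a r, u ≠ a := fun u hu => ne_of_mem_of_not_mem hu (self_notMem_armTo a r)
  refine isPreconnected_connectedComponentIn.induction₂ (fun u v => a ∉ arc u v)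
    (fun u hu => (hT.eventually_notMem_arc (hne u hu)).filter_mono nhdsWithin_le_nhds)
    (fun u v w _ _ _ huv hvw huw => ?_) (fun u v _ _ huv => hT.comm u v ▸ huv)
    (mem_armTo_self (ne_of_mem_armTo hb)) hb ha
  exact (hT.arc_subset_union u v w huw).elim huv hvw

theorem isEndpoint_iff_forall_notMem_arc (hT : IsFiniteTree arc) (h : x ≠ z) :
    IsEndpoint z ↔ ∀ y ≠ z, z ∉ arc x y := by
  simp only [isEndpoint_iff h, ← hT.separates_iff_mem_arc, Separates, not_not]

theorem exists_mem_arc_inter_of_isEndpoint (hT : IsFiniteTree arc) (hz : IsEndpoint z) (hx : x ≠ z)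
    (hy : y ≠ z) : ∃ p ≠ z, p ∈ arc z x ∧ p ∈ arc z y := by
  obtain ⟨p, hzx, hxy, hyz⟩ := hT.exists_isMedian z x y
  refine ⟨p, ?_, hzx, hT.comm y z ▸ hyz⟩
  rintro rfl
  exact (hT.isEndpoint_iff_forall_notMem_arc hx).1 hz y hy hxy

theorem isBranchPt_of_isMedian (hT : IsFiniteTree arc) (h : IsMedian arc x y z m) (hx : x ≠ m)
    (hy : y ≠ m) (hz : z ≠ m) : IsBranchPt m := by
  have hne : ∀ {u v}, v ≠ m → m ∈ arc u v → armTo m u ≠ armTo m v := fun hv huv =>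
    (separates_iff_armTo_ne hv).1 (hT.separates_iff_mem_arc.2 huv)
  refine (two_lt_ncard_iff (hT.arms_finite m)).2 ⟨armTo m x, armTo m y, armTo m z, ⟨x, hx, rfl⟩,
    ⟨y, hy, rfl⟩, ⟨z, hz, rfl⟩, hne hy h.1, (hne hx h.2.2).symm, hne hz h.2.1⟩

theorem exists_isMedian_of_isBranchPt (hT : IsFiniteTree arc) (h : IsBranchPt m) :
    ∃ x y z, IsEndpoint x ∧ IsEndpoint y ∧ IsEndpoint z ∧ IsMedian arc x y z m := by
  have hmem : ∀ C ∈ arms m, ∃ e, IsEndpoint e ∧ e ≠ m ∧ armTo m e = C := by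
    rintro _ ⟨x, hx, rfl⟩
    obtain ⟨e, he, hend⟩ := exists_isEndpoint_mem_armTo hT.arms_finite hx
    exact ⟨e, hend, ne_of_mem_of_not_mem he (self_notMem_armTo m x), (armTo_eq_of_mem he).symm⟩
  obtain ⟨A, B, C, hA, hB, hC, hAB, hAC, hBC⟩ := (two_lt_ncard_iff (hT.arms_finite m)).1 h
  obtain ⟨x, hx, hxm, rfl⟩ := hmem A hA
  obtain ⟨y, hy, hym, rfl⟩ := hmem B hB
  obtain ⟨z, hz, hzm, rfl⟩ := hmem C hC
  have harc : ∀ {u v}, v ≠ m → armTo m u ≠ armTo m v → m ∈ arc u v := fun hv hne =>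
    hT.mem_arc_of_separates ((separates_iff_armTo_ne hv).2 hne)
  exact ⟨x, y, z, hx, hy, hz, harc hym hAB, harc hzm hBC, harc hxm hAC.symm⟩

end IsFiniteTree

/-! ### Dynamics with one critical point -/

/-- A finite tree with an expansive map that is at most two-to-one and injective near every point
other than `c0`, such that all endpoints lie on the orbit of `c0`. Unlike in a Hubbard tree, this
orbit may be infinite and `f` need not be surjective. -/
structure UnicriticalTree (X : Type*) [TopologicalSpace X] where
  f : X → X
  c0 : X
  arc : X → X → Set X
  tree : IsFiniteTree arc
  continuous : Continuous f
  two_preimages : ∀ y : X, ∃ a b : X, f ⁻¹' {y} ⊆ {a, b}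
  locally_injective : ∀ x ≠ c0, ∃ U ∈ 𝓝 x, InjOn f U
  endpoints_on_orbit : ∀ x : X, IsEndpoint x → ∃ k : ℕ, f^[k] c0 = x
  crit_not_fixed : f c0 ≠ c0
  expansive : ∀ x y : X, x ≠ y →
    (IsBranchPt x ∨ ∃ k : ℕ, f^[k] c0 = x) →
    (IsBranchPt y ∨ ∃ k : ℕ, f^[k] c0 = y) →
    ∃ n : ℕ, c0 ∈ f^[n] '' arc x y

namespace UnicriticalTree

section Defs

variable {X Y : Type*} [TopologicalSpace X] [TopologicalSpace Y]

open Classical in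
/-- The symbol of a point with respect to the partition of the tree by the critical point. -/
noncomputable def symbol (M : UnicriticalTree X) (x : X) : Sym :=
  if x = M.c0 then Sym.star else if x ∈ armTo M.c0 (M.f M.c0) then Sym.one else Sym.zero

/-- The itinerary of `x`, indexed from `0`. -/
noncomputable def itinerary (M : UnicriticalTree X) (x : X) (n : ℕ) : Sym :=
  M.symbol (M.f^[n] x)

/-- The marked points: branch points and points of the critical orbit. -/
def IsMarked (M : UnicriticalTree X) (x : X) : Prop :=
  IsBranchPt x ∨ ∃ k : ℕ, M.f^[k] M.c0 = x

/-- Two marked points joined by an arc without further marked points. -/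
def IsEdge (M : UnicriticalTree X) (x y : X) : Prop :=
  M.IsMarked x ∧ M.IsMarked y ∧ x ≠ y ∧ ∀ w ∈ M.arc x y, M.IsMarked w → w = x ∨ w = y

/-- A bijection between the marked points, given by the values of `φ` on them, which conjugates the
dynamics and preserves edges. -/
def Equivalent (M : UnicriticalTree X) (M' : UnicriticalTree Y) : Prop :=
  ∃ φ : X → Y,
    (∀ x : X, M.IsMarked x → M'.IsMarked (φ x)) ∧
    (∀ x x' : X, M.IsMarked x → M.IsMarked x' → φ x = φ x' → x = x') ∧
    (∀ y : Y, M'.IsMarked y → ∃ x : X, M.IsMarked x ∧ φ x = y) ∧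
    φ M.c0 = M'.c0 ∧
    (∀ x : X, M.IsMarked x → φ (M.f x) = M'.f (φ x)) ∧
    (∀ x x' : X, M.IsMarked x → M.IsMarked x' → (M.IsEdge x x' ↔ M'.IsEdge (φ x) (φ x')))

/-- The critical point is not in the interior of the arc from `x` to `y`, so that the arc is mapped
injectively. -/
def CritFree (M : UnicriticalTree X) (x y : X) : Prop :=
  M.c0 ∈ M.arc x y → M.c0 = x ∨ M.c0 = y

open Classical in
/-- The arc from `m` to `x` truncated at the critical point ends in `cut m x`. -/
noncomputable def cut (M : UnicriticalTree X) (m x : X) : X :=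
  if M.c0 ∈ M.arc m x then M.c0 else x

end Defs

section Elementary

variable {X Y : Type*} [TopologicalSpace X] [TopologicalSpace Y] {M : UnicriticalTree X}
  {M' : UnicriticalTree Y} {m x : X} {x' : Y}

theorem critFree_crit_left (M : UnicriticalTree X) (x : X) : M.CritFree M.c0 x :=
  fun _ => Or.inl rfl

theorem symbol_eq_star_iff : M.symbol x = Sym.star ↔ x = M.c0 := by
  unfold symbol
  split_ifs <;> simp_all

theorem cut_eq_crit (h : M.c0 ∈ M.arc m (M.cut m x)) : M.cut m x = M.c0 := by
  unfold cut at h ⊢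
  split_ifs at h ⊢ with hc
  · rfl
  · exact absurd h hc

theorem isMarked_map_cut_orbit (M : UnicriticalTree X) (m : X) (k : ℕ) :
    M.IsMarked (M.f (M.cut m (M.f^[k] M.c0))) := by
  unfold cut
  split_ifs
  · exact Or.inr ⟨1, rfl⟩
  · exact Or.inr ⟨k + 1, Function.iterate_succ_apply' _ _ _⟩

theorem itinerary_map_eq (h : M.itinerary x = M'.itinerary x') :
    M.itinerary (M.f x) = M'.itinerary (M'.f x') :=
  funext fun n => congrFun h (n + 1)

theorem itinerary_crit_eq (h : M.itinerary (M.f M.c0) = M'.itinerary (M'.f M'.c0)) :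
    M.itinerary M.c0 = M'.itinerary M'.c0 := by
  funext n
  cases n with
  | zero => exact (symbol_eq_star_iff.2 rfl).trans (symbol_eq_star_iff.2 rfl).symm
  | succ n => exact congrFun h n

theorem itinerary_orbit_eq (h0 : M.itinerary M.c0 = M'.itinerary M'.c0) (k : ℕ) :
    M.itinerary (M.f^[k] M.c0) = M'.itinerary (M'.f^[k] M'.c0) := by
  funext n
  simpa only [itinerary, Function.iterate_add_apply] using congrFun h0 (n + k)

end Elementary

variable {X : Type*} [TopologicalSpace X] [T2Space X] {M : UnicriticalTree X} {a b m u x y z : X}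

theorem CritFree.mono (h : M.CritFree x y) (ha : a ∈ M.arc x y) (hb : b ∈ M.arc x y) :
    M.CritFree a b := by
  intro hc
  rcases h (M.tree.arc_subset ha hb hc) with rfl | rfl
  · exact M.tree.eq_or_eq_of_left_mem ha hb hc
  · rw [M.tree.comm x] at ha hb
    exact M.tree.eq_or_eq_of_left_mem ha hb hc

theorem mem_arc_cut_left (h : m ∈ M.arc x y) : m ∈ M.arc (M.cut m x) y := by
  unfold cut
  split_ifs with hc
  · exact M.tree.mem_of_left_mem h (M.tree.comm m x ▸ hc)
  · exact h

theorem exists_map_mem_arc (hu : u ∈ M.arc x y) (hux : u ≠ x) (huy : u ≠ y) (hc : u ≠ M.c0) :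
    ∃ v ∈ M.arc x y, ∃ w ∈ M.arc x y, M.f v ≠ M.f u ∧ M.f w ≠ M.f u ∧
      M.f u ∈ M.arc (M.f v) (M.f w) := by
  obtain ⟨U, hU, hinj⟩ := M.locally_injective u hc
  obtain ⟨v, w, hvu, hwu, huvw, hsubU, hsub⟩ :=
    M.tree.exists_arc_subset_of_mem_nhds hu hux huy hU
  have hv := M.tree.left_mem v w
  have hw := M.tree.right_mem v w
  have huU := mem_of_mem_nhds hU
  refine ⟨v, hsub hv, w, hsub hw, hinj.ne (hsubU hv) huU hvu, hinj.ne (hsubU hw) huU hwu, ?_⟩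
  rw [← M.tree.image_arc M.tree.toUniqueArcs M.continuous (hinj.mono hsubU)]
  exact mem_image_of_mem M.f huvw

section Connected

variable [CompactSpace X] [ConnectedSpace X]

/-- Otherwise the image of the arc is a loop, and `f` would fold at a point `u` whose image is
extremal. -/
theorem CritFree.map_ne (h : M.CritFree x y) (hxy : x ≠ y) : M.f x ≠ M.f y := by
  intro hf
  obtain ⟨u, hu, hux, huy, hmax⟩ : ∃ u ∈ M.arc x y, u ≠ x ∧ u ≠ y ∧
      ∀ b ∈ M.f '' M.arc x y, Separates (M.f u) (M.f x) b → b = M.f u := by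
    obtain ⟨q, ⟨v, hv, rfl⟩, hmax⟩ := exists_forall_separates_imp_eq M.tree.arms_finite (M.f x)
      ((M.tree.isCompact x y).image M.continuous) ⟨_, mem_image_of_mem M.f (M.tree.left_mem x y)⟩
    by_cases hvx : M.f v = M.f x
    · obtain ⟨w, hw, hwx, hwy, -⟩ := M.tree.exists_separates hxy
      have hwv : M.f w = M.f v :=
        hmax _ (mem_image_of_mem M.f hw) (by simp [Separates, hvx, armTo_self])
      exact ⟨w, hw, hwx, hwy, hwv ▸ hmax⟩
    · exact ⟨v, hv, fun e => hvx (e ▸ rfl), fun e => hvx (e ▸ hf.symm), hmax⟩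
  have hc : u ≠ M.c0 := fun e => (h (e ▸ hu)).elim (e ▸ hux) (e ▸ huy)
  obtain ⟨v, hv, w, hw, hvu, hwu, huvw⟩ := exists_map_mem_arc hu hux huy hc
  have hmem : ∀ v ∈ M.arc x y, M.f v ≠ M.f u → M.f v ∈ armTo (M.f u) (M.f x) :=
    fun v hv hvu => by_contra fun hsep => hvu (hmax _ (mem_image_of_mem M.f hv) hsep)
  exact M.tree.separates_iff_mem_arc.2 huvw (armTo_eq_of_mem (hmem v hv hvu) ▸ hmem w hw hwu)

theorem CritFree.injOn (h : M.CritFree x y) : InjOn M.f (M.arc x y) :=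
  fun _ ha _ hb hf => by_contra fun hne => (h.mono ha hb).map_ne hne hf

theorem CritFree.image_arc (h : M.CritFree x y) :
    M.f '' M.arc x y = M.arc (M.f x) (M.f y) :=
  M.tree.image_arc M.tree.toUniqueArcs M.continuous h.injOn

theorem not_isEndpoint_map (hc : x ≠ M.c0) (hx : ¬ IsEndpoint x) : ¬ IsEndpoint (M.f x) := by
  have : Nontrivial X := ⟨M.f M.c0, M.c0, M.crit_not_fixed⟩
  obtain ⟨r, hr⟩ := exists_ne x
  rw [M.tree.isEndpoint_iff_forall_notMem_arc hr] at hx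
  push Not at hx
  obtain ⟨y, hy, hxy⟩ := hx
  obtain ⟨v, -, w, -, hv, hw, hvw⟩ := exists_map_mem_arc hxy hr.symm hy.symm hc
  exact fun h => (M.tree.isEndpoint_iff_forall_notMem_arc hv).1 h _ hw hvw

theorem isEndpoint_map_crit (h : ¬ IsEndpoint M.c0) : IsEndpoint (M.f M.c0) := by
  by_contra hv
  have horbit : ∀ n, ¬ IsEndpoint (M.f^[n] M.c0) := fun n => by
    induction n with
    | zero => exact h
    | succ n ih =>
      rw [Function.iterate_succ_apply']
      by_cases hn : M.f^[n] M.c0 = M.c0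
      · rwa [hn]
      · exact not_isEndpoint_map hn ih
  obtain ⟨e, he, -⟩ := exists_isEndpoint_separates M.tree.arms_finite M.crit_not_fixed
  obtain ⟨k, rfl⟩ := M.endpoints_on_orbit e he
  exact horbit k he

/-- Near the endpoint `f c0`, the images of three arms at `c0` overlap, giving points with three
preimages. -/
theorem not_isMedian_crit (hx : x ≠ M.c0) (hy : y ≠ M.c0) (hz : z ≠ M.c0) :
    ¬ IsMedian M.arc x y z M.c0 := by
  intro h
  have hend : IsEndpoint (M.f M.c0) := isEndpoint_map_crit fun he =>
    (M.tree.isEndpoint_iff_forall_notMem_arc hx).1 he y hy h.1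
  have hne : ∀ w ≠ M.c0, M.f w ≠ M.f M.c0 := fun w hw =>
    ((M.critFree_crit_left w).map_ne hw.symm).symm
  obtain ⟨p, hp, hpx, hpy⟩ :=
    M.tree.exists_mem_arc_inter_of_isEndpoint hend (hne x hx) (hne y hy)
  obtain ⟨q, hq, hqp, hqz⟩ := M.tree.exists_mem_arc_inter_of_isEndpoint hend hp (hne z hz)
  have hpre : ∀ w, q ∈ M.arc (M.f M.c0) (M.f w) → ∃ v ∈ M.arc M.c0 w, M.f v = q :=
    fun w hw => by rwa [← (M.critFree_crit_left w).image_arc] at hw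
  obtain ⟨x', hx', hfx⟩ := hpre x (M.tree.subset_left hpx hqp)
  obtain ⟨y', hy', hfy⟩ := hpre y (M.tree.subset_left hpy hqp)
  obtain ⟨z', hz', hfz⟩ := hpre z hqz
  have hdist : ∀ {u v u' v'}, M.c0 ∈ M.arc u v → u' ∈ M.arc M.c0 u → v' ∈ M.arc M.c0 v →
      M.f u' = q → u' ≠ v' := by
    rintro u v u' _ huv hu' hv' hfu rfl
    exact hq (M.tree.eq_of_mem huv (M.tree.comm _ u ▸ hu') hv' ▸ hfu.symm)
  obtain ⟨a, b, hab⟩ := M.two_preimages q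
  have hxy := hdist h.1 hx' hy' hfx
  have hyz := hdist h.2.1 hy' hz' hfy
  have hzx := hdist h.2.2 hz' hx' hfz
  have hx'' : x' = a ∨ x' = b := hab hfx
  have hy'' : y' = a ∨ y' = b := hab hfy
  have hz'' : z' = a ∨ z' = b := hab hfz
  grind

/-! ### Symbols and itineraries -/

theorem symbol_eq_symbol_iff (hx : x ≠ M.c0) (hy : y ≠ M.c0) : M.symbol x = M.symbol y ↔
    (M.c0 ∈ M.arc (M.f M.c0) x ↔ M.c0 ∈ M.arc (M.f M.c0) y) := by
  simp only [← M.tree.separates_iff_mem_arc, Separates, symbol, if_neg hx, if_neg hy]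
  split_ifs <;> simp_all

theorem crit_notMem_arc_iff :
    M.c0 ∉ M.arc x y ↔ M.symbol x = M.symbol y ∧ M.symbol x ≠ Sym.star := by
  rcases eq_or_ne x M.c0 with rfl | hx
  · simp [M.tree.left_mem, symbol_eq_star_iff]
  rcases eq_or_ne y M.c0 with rfl | hy
  · simp [M.tree.right_mem, symbol_eq_star_iff.2]
  rw [Ne, symbol_eq_star_iff, and_iff_left hx, symbol_eq_symbol_iff hx hy]
  have hsub := M.tree.arc_subset_union
  have hcomm := M.tree.comm
  refine ⟨fun h => ⟨fun hfx => ?_, fun hfy => ?_⟩, fun h hxy => ?_⟩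
  · exact (hsub _ y _ hfx).resolve_right (hcomm x y ▸ h)
  · exact (hsub _ x _ hfy).resolve_right h
  · have hfx : M.c0 ∈ M.arc (M.f M.c0) x := (hsub x _ y hxy).elim (hcomm _ x ▸ ·) h.2
    exact not_isMedian_crit M.crit_not_fixed hx hy ⟨hfx, hxy, hcomm _ y ▸ h.1 hfx⟩

theorem critFree_of_symbol_eq (h : M.symbol x = M.symbol y) : M.CritFree x y := by
  intro hc
  by_contra! hne
  exact crit_notMem_arc_iff.2 ⟨h, fun hx => hne.1 (symbol_eq_star_iff.1 hx).symm⟩ hc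

theorem symbol_eq_of_mem_arc (h : M.symbol x = M.symbol y) (hm : m ∈ M.arc x y) :
    M.symbol m = M.symbol x := by
  by_cases hx : M.symbol x = Sym.star
  · obtain rfl := symbol_eq_star_iff.1 hx
    obtain rfl := symbol_eq_star_iff.1 (h.symm.trans hx)
    rw [M.tree.self] at hm
    rw [mem_singleton_iff.1 hm]
  · exact (crit_notMem_arc_iff.1
      fun hc => crit_notMem_arc_iff.2 ⟨h, hx⟩ (M.tree.subset_left hm hc)).1.symm

/-- The symbol occurring at least twice among three, and `*` if the three are distinct. -/
def majority (a b c : Sym) : Sym :=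
  if a = b then a else if b = c then b else if c = a then c else Sym.star

theorem symbol_eq_majority (h : IsMedian M.arc x y z m) :
    M.symbol m = majority (M.symbol x) (M.symbol y) (M.symbol z) := by
  unfold majority
  split_ifs with hxy hyz hzx
  · exact symbol_eq_of_mem_arc hxy h.1
  · exact symbol_eq_of_mem_arc hyz h.2.1
  · exact symbol_eq_of_mem_arc hzx h.2.2
  · have hmem : ∀ {u v}, M.symbol u ≠ M.symbol v → M.c0 ∈ M.arc u v :=
      fun huv => by_contra fun hc => huv (crit_notMem_arc_iff.1 hc).1
    exact symbol_eq_star_iff.2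
      (IsMedian.unique M.tree.toUniqueArcs ⟨hmem hxy, hmem hyz, hmem hzx⟩ h)

theorem map_mem_arc_map_cut (h : m ∈ M.arc x y) :
    M.f m ∈ M.arc (M.f (M.cut m x)) (M.f (M.cut m y)) := by
  have hm : m ∈ M.arc (M.cut m x) (M.cut m y) := by
    have h' := mem_arc_cut_left h
    rw [M.tree.comm] at h' ⊢
    exact mem_arc_cut_left h'
  have hfree : M.CritFree (M.cut m x) (M.cut m y) := fun hc =>
    (M.tree.mem_or_mem hm hc).imp (fun h' => (cut_eq_crit (M.tree.comm _ m ▸ h')).symm)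
      (fun h' => (cut_eq_crit h').symm)
  exact hfree.image_arc ▸ mem_image_of_mem M.f hm

theorem isMedian_map_cut (h : IsMedian M.arc x y z m) :
    IsMedian M.arc (M.f (M.cut m x)) (M.f (M.cut m y)) (M.f (M.cut m z)) (M.f m) :=
  ⟨map_mem_arc_map_cut h.1, map_mem_arc_map_cut h.2.1, map_mem_arc_map_cut h.2.2⟩

theorem image_iterate_arc (h : M.itinerary x = M.itinerary y) (n : ℕ) :
    InjOn M.f^[n] (M.arc x y) ∧ M.f^[n] '' M.arc x y = M.arc (M.f^[n] x) (M.f^[n] y) := by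
  induction n with
  | zero => simp
  | succ n ih =>
    have hfree := critFree_of_symbol_eq (congrFun h n)
    rw [Function.iterate_succ', image_comp, ih.2]
    exact ⟨hfree.injOn.comp ih.1 (ih.2 ▸ mapsTo_image _ _), hfree.image_arc⟩

theorem IsMarked.eq_of_itinerary_eq (hx : M.IsMarked x) (hy : M.IsMarked y)
    (h : M.itinerary x = M.itinerary y) : x = y := by
  by_contra hne
  obtain ⟨n, hn⟩ := M.expansive x y hne hx hy
  obtain ⟨hinj, himage⟩ := image_iterate_arc h n
  have hstar : M.symbol (M.f^[n] x) = Sym.star := by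
    by_contra hs
    exact crit_notMem_arc_iff.2 ⟨congrFun h n, hs⟩ (himage ▸ hn)
  refine hne (hinj (M.tree.left_mem x y) (M.tree.right_mem x y) ?_)
  rw [symbol_eq_star_iff.1 hstar, symbol_eq_star_iff.1 ((congrFun h n).symm.trans hstar)]

/-! ### Marked points -/

theorem IsMarked.of_isMedian (h : IsMedian M.arc x y z m) (hx : M.IsMarked x) (hy : M.IsMarked y)
    (hz : M.IsMarked z) : M.IsMarked m := by
  rcases eq_or_ne x m with rfl | hxm
  · exact hx
  rcases eq_or_ne y m with rfl | hym
  · exact hy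
  rcases eq_or_ne z m with rfl | hzm
  · exact hz
  exact Or.inl (M.tree.isBranchPt_of_isMedian h hxm hym hzm)

theorem IsMarked.exists_isMedian_orbit (h : M.IsMarked m) :
    ∃ i j k, IsMedian M.arc (M.f^[i] M.c0) (M.f^[j] M.c0) (M.f^[k] M.c0) m := by
  rcases h with h | ⟨k, rfl⟩
  · obtain ⟨x, y, z, hx, hy, hz, hm⟩ := M.tree.exists_isMedian_of_isBranchPt h
    obtain ⟨i, rfl⟩ := M.endpoints_on_orbit x hx
    obtain ⟨j, rfl⟩ := M.endpoints_on_orbit y hy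
    obtain ⟨k, rfl⟩ := M.endpoints_on_orbit z hz
    exact ⟨i, j, k, hm⟩
  · have hk := M.tree.left_mem (M.f^[k] M.c0) (M.f^[k] M.c0)
    exact ⟨k, k, k, hk, hk, hk⟩

theorem IsMarked.map (h : M.IsMarked m) : M.IsMarked (M.f m) := by
  obtain ⟨i, j, k, hm⟩ := h.exists_isMedian_orbit
  exact .of_isMedian (isMedian_map_cut hm) (M.isMarked_map_cut_orbit m i)
    (M.isMarked_map_cut_orbit m j) (M.isMarked_map_cut_orbit m k)

/-! ### Comparing two trees -/

variable {Y : Type*} [TopologicalSpace Y] [T2Space Y] [CompactSpace Y] [ConnectedSpace Y]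
  {M' : UnicriticalTree Y} {m' x' y' z' : Y}

theorem itinerary_cut_eq (h0 : M.itinerary M.c0 = M'.itinerary M'.c0)
    (hm : M.symbol m = M'.symbol m') (hx : M.itinerary x = M'.itinerary x') :
    M.itinerary (M.cut m x) = M'.itinerary (M'.cut m' x') := by
  have hcut : M.c0 ∈ M.arc m x ↔ M'.c0 ∈ M'.arc m' x' := by
    have hx0 : M.symbol x = M'.symbol x' := congrFun hx 0
    rw [← not_iff_not, crit_notMem_arc_iff, crit_notMem_arc_iff, hm, hx0]
  unfold cut
  split_ifs with hc hc' hc'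
  · exact h0
  · exact absurd (hcut.1 hc) hc'
  · exact absurd (hcut.2 hc') hc
  · exact hx

theorem symbol_eq_of_isMedian (hx : M.symbol x = M'.symbol x') (hy : M.symbol y = M'.symbol y')
    (hz : M.symbol z = M'.symbol z') (hm : IsMedian M.arc x y z m)
    (hm' : IsMedian M'.arc x' y' z' m') : M.symbol m = M'.symbol m' := by
  rw [symbol_eq_majority hm, symbol_eq_majority hm', hx, hy, hz]

theorem itinerary_eq_of_isMedian (h0 : M.itinerary M.c0 = M'.itinerary M'.c0)
    (hx : M.itinerary x = M'.itinerary x') (hy : M.itinerary y = M'.itinerary y')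
    (hz : M.itinerary z = M'.itinerary z') (hm : IsMedian M.arc x y z m)
    (hm' : IsMedian M'.arc x' y' z' m') : M.itinerary m = M'.itinerary m' := by
  funext n
  induction n generalizing x y z m x' y' z' m' with
  | zero => exact symbol_eq_of_isMedian (congrFun hx 0) (congrFun hy 0) (congrFun hz 0) hm hm'
  | succ _ ih =>
    have hsymbol : M.symbol m = M'.symbol m' :=
      symbol_eq_of_isMedian (congrFun hx 0) (congrFun hy 0) (congrFun hz 0) hm hm'
    have hcut {u : X} {u' : Y} (hu : M.itinerary u = M'.itinerary u') :=
      itinerary_map_eq (itinerary_cut_eq h0 hsymbol hu)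
    exact ih (hcut hx) (hcut hy) (hcut hz) (isMedian_map_cut hm) (isMedian_map_cut hm')

theorem IsMarked.exists_itinerary_eq (h0 : M.itinerary M.c0 = M'.itinerary M'.c0)
    (hx : M.IsMarked x) : ∃ x', M'.IsMarked x' ∧ M.itinerary x = M'.itinerary x' := by
  obtain ⟨i, j, k, hm⟩ := hx.exists_isMedian_orbit
  obtain ⟨x', hx'⟩ := M'.tree.exists_isMedian (M'.f^[i] M'.c0) (M'.f^[j] M'.c0) (M'.f^[k] M'.c0)
  exact ⟨x', .of_isMedian hx' (Or.inr ⟨i, rfl⟩) (Or.inr ⟨j, rfl⟩) (Or.inr ⟨k, rfl⟩),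
    itinerary_eq_of_isMedian h0 (itinerary_orbit_eq h0 i) (itinerary_orbit_eq h0 j)
      (itinerary_orbit_eq h0 k) hm hx'⟩

theorem mem_arc_of_itinerary_eq (h0 : M.itinerary M.c0 = M'.itinerary M'.c0)
    (hx' : M'.IsMarked x') (hy' : M'.IsMarked y') (hm' : M'.IsMarked m')
    (hx : M.itinerary x = M'.itinerary x') (hy : M.itinerary y = M'.itinerary y')
    (hm : M.itinerary m = M'.itinerary m') (h : m ∈ M.arc x y) : m' ∈ M'.arc x' y' := by
  obtain ⟨p, hp⟩ := M'.tree.exists_isMedian x' y' m'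
  have hpm : M'.itinerary p = M'.itinerary m' :=
    (itinerary_eq_of_isMedian h0 hx hy hm
      ⟨h, M.tree.right_mem y m, M.tree.left_mem m x⟩ hp).symm.trans hm
  exact (IsMarked.of_isMedian hp hx' hy' hm').eq_of_itinerary_eq hm' hpm ▸ hp.1

theorem IsEdge.of_itinerary_eq (h0 : M.itinerary M.c0 = M'.itinerary M'.c0)
    (hx' : M'.IsMarked x') (hy' : M'.IsMarked y') (hx : M.itinerary x = M'.itinerary x')
    (hy : M.itinerary y = M'.itinerary y') (h : M.IsEdge x y) : M'.IsEdge x' y' := by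
  obtain ⟨mx, my, hne, hedge⟩ := h
  refine ⟨hx', hy', ?_, fun w' hw' mw' => ?_⟩
  · rintro rfl
    exact hne (mx.eq_of_itinerary_eq my (hx.trans hy.symm))
  obtain ⟨w, mw, hw⟩ := mw'.exists_itinerary_eq h0.symm
  rcases hedge w (mem_arc_of_itinerary_eq h0.symm mx my mw hx.symm hy.symm hw hw') mw with rfl | rfl
  · exact Or.inl (mw'.eq_of_itinerary_eq hx' (hw.trans hx))
  · exact Or.inr (mw'.eq_of_itinerary_eq hy' (hw.trans hy))

end Connected

end UnicriticalTree

/-- The unicritical tree underlying a Hubbard tree. Its itineraries are indexed from `0`, so that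
entry `n` is entry `n + 1` of `HubbardTree.itin`. -/
def HubbardTree.toUnicriticalTree {X : Type*} [TopologicalSpace X] (H : HubbardTree X) :
    UnicriticalTree X where
  f := H.f
  c0 := H.c0
  arc := H.arc
  tree := ⟨⟨H.arc_isArc, H.arc_unique⟩, H.arms_finite, H.endpoint_finite⟩
  continuous := H.cont
  two_preimages := H.two_preimages
  locally_injective x hx := by
    obtain ⟨U, hU, hxU, hemb⟩ := H.local_homeo x hx
    exact ⟨U, hU.mem_nhds hxU, injOn_iff_injective.2 hemb.injective⟩
  endpoints_on_orbit := H.endpoints_on_orbit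
  crit_not_fixed := H.crit_not_fixed
  expansive := H.expansive

theorem uniqueness_of_hubbard_tree_general {X Y : Type*} [TopologicalSpace X] [T2Space X]
    [CompactSpace X] [ConnectedSpace X] [TopologicalSpace Y] [T2Space Y] [CompactSpace Y]
    [ConnectedSpace Y] (M : UnicriticalTree X) (M' : UnicriticalTree Y)
    (hkn : M.itinerary (M.f M.c0) = M'.itinerary (M'.f M'.c0)) : M.Equivalent M' := by
  have h0 := UnicriticalTree.itinerary_crit_eq hkn
  choose! φ hmark hitin using fun x (hx : M.IsMarked x) => hx.exists_itinerary_eq h0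
  have hcrit : M.IsMarked M.c0 := Or.inr ⟨0, rfl⟩
  have hcrit' : M'.IsMarked M'.c0 := Or.inr ⟨0, rfl⟩
  refine ⟨φ, hmark, fun x y hx hy e => ?_, fun x' hx' => ?_, ?_, fun x hx => ?_,
    fun x y hx hy => ⟨?_, ?_⟩⟩
  · exact hx.eq_of_itinerary_eq hy ((hitin x hx).trans (e ▸ (hitin y hy).symm))
  · obtain ⟨x, hx, h⟩ := hx'.exists_itinerary_eq h0.symm
    exact ⟨x, hx, (hmark x hx).eq_of_itinerary_eq hx' ((hitin x hx).symm.trans h.symm)⟩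
  · exact (hmark _ hcrit).eq_of_itinerary_eq hcrit' ((hitin _ hcrit).symm.trans h0)
  · exact (hmark _ hx.map).eq_of_itinerary_eq (hmark x hx).map
      ((hitin _ hx.map).symm.trans (UnicriticalTree.itinerary_map_eq (hitin x hx)))
  · exact .of_itinerary_eq h0 (hmark x hx) (hmark y hy) (hitin x hx) (hitin y hy)
  · exact .of_itinerary_eq h0.symm hx hy (hitin x hx).symm (hitin y hy).symm

/-- Corollary 5.20, "Uniqueness of Hubbard Tree".
A Hubbard tree is determined uniquely up to equivalence by its kneading sequence:
any two Hubbard trees with the same (necessarily `*`-periodic or preperiodic)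
kneading sequence are equivalent. -/
theorem uniqueness_of_hubbard_tree
    {X Y : Type*} [TopologicalSpace X] [TopologicalSpace Y]
    (H : HubbardTree X) (H' : HubbardTree Y)
    (hkn : ∀ k : ℕ, 1 ≤ k → H.kneading k = H'.kneading k) :
    H.Equivalent H' := by
  have := H.compact
  have := H.t2
  have := H.conn
  have := H'.compact
  have := H'.t2
  have := H'.conn
  exact uniqueness_of_hubbard_tree_general H.toUnicriticalTree H'.toUnicriticalTree
    (funext fun n => hkn (n + 1) n.succ_pos)

end HubbardTrees
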